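/- Let n ≥ 2 be an integer and let k be an even natural number. Let P : ℍⁿ → ℂ be a complex-valued polynomial function in the 4n real coordinates of ℍⁿ ≅ ℝ^{4n} which is harmonic (its Laplacian on ℝ^{4n} vanishes), homogeneous of degree k, invariant under the left action of 1 × Sp(n−1) (P(Mx) = P(x) for all M ∈ 1 × Sp(n−1) and x ∈ ℍⁿ) and invariant under right multiplication by unit quaternions (P(xq) = P(x) for all q ∈ ℍ with |q| = 1). Define φ : (0,1) → ℂ by φ(τ) = P(x(arccos √τ)). Then φ is smooth on (0,1) and for every τ ∈ (0,1): τ(1−τ) φ''(τ) + 2(1 − nτ) φ'(τ) + (k/2)(k/2 + 2n − 1) φ(τ) = 0. -/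

import Mathlib

noncomputable section
open scoped Quaternion
open Matrix

/-- Second derivative of `f` along direction `d` at the point `x`. -/
def qdir2 {n : ℕ} (f : (Fin n → ℍ[ℝ]) → ℂ) (d x : Fin n → ℍ[ℝ]) : ℂ :=
  iteratedDeriv 2 (fun t : ℝ => f (x + t • d)) 0

/-- The Laplacian of `f : ℍⁿ → ℂ` viewed as a function on `ℝ^{4n}`: the sum of
the `4n` second partial derivatives along the real coordinate directions. -/
def qLap {n : ℕ} (f : (Fin n → ℍ[ℝ]) → ℂ) (x : Fin n → ℍ[ℝ]) : ℂ :=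
  ∑ j : Fin n,
    (qdir2 f (Pi.single j 1) x + qdir2 f (Pi.single j ⟨0,1,0,0⟩) x +
      qdir2 f (Pi.single j ⟨0,0,1,0⟩) x + qdir2 f (Pi.single j ⟨0,0,0,1⟩) x)

/-- `P` is a complex-valued polynomial function of the `4n` real coordinates of `ℍⁿ`. -/
def IsPolyFun {n : ℕ} (P : (Fin n → ℍ[ℝ]) → ℂ) : Prop :=
  ∃ p : MvPolynomial (Fin n × Fin 4) ℂ,
    ∀ x, P x = MvPolynomial.eval
      (fun jl => ((![ (x jl.1).re, (x jl.1).imI, (x jl.1).imJ, (x jl.1).imK ] jl.2 : ℝ) : ℂ)) p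

/-- `x(θ) = (cos θ, 0, …, 0, sin θ) ∈ ℍⁿ`. -/
def xtheta (n : ℕ) (θ : ℝ) : Fin n → ℍ[ℝ] :=
  fun i => if (i : ℕ) = 0 then ((Real.cos θ : ℝ) : ℍ[ℝ])
    else if (i : ℕ) = n - 1 then ((Real.sin θ : ℝ) : ℍ[ℝ]) else 0

/-!
Multiplying the coordinates by unit quaternions on the left replaces `x` by the vector of the norms
`‖x i‖` (the unit needed in the first coordinate is supplied by right multiplication), and a real
reflection fixing the first coordinate then carries it to any other vector with the same `‖x 0‖` and
the same norm. Hence `P` depends only on `X = ‖x 0‖ ^ 2` and `N = ∑ i, ‖x i‖ ^ 2`, and homogeneity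
of degree `k` gives `P = N ^ (k / 2) * φ (X / N)` away from the origin. At a unit vector with
`X = τ` the Laplacian of the right-hand side is four times the hypergeometric operator applied
to `φ`.
-/

open Filter Topology

/-- The function homogeneous of degree `s` in two real variables `X` and `N` that restricts to `φ`
on the line `N = 1`. -/
def homogenize (s : ℂ) (φ : ℝ → ℂ) (X N : ℝ) : ℂ :=
  (N : ℂ) ^ s * φ (X / N)

/-- The function on `ℍⁿ` homogeneous of degree `2s` whose value at a unit vector `x` is
`φ (‖x z‖ ^ 2)`, where `z` is the distinguished coordinate. -/
def zonal {n : ℕ} (z : Fin n) (s : ℂ) (φ : ℝ → ℂ) (x : Fin n → ℍ[ℝ]) : ℂ :=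
  homogenize s φ (‖x z‖ ^ 2) (∑ i, ‖x i‖ ^ 2)

/-- The profile `φ(τ) = P(x(arccos √τ))` of a function on `ℍⁿ`. -/
def profile {n : ℕ} (P : (Fin n → ℍ[ℝ]) → ℂ) (τ : ℝ) : ℂ :=
  P (xtheta n (Real.arccos (Real.sqrt τ)))

/-- Invariance of a function of `x : ι → ℍ` under the unitary quaternionic matrices that fix the
basis vector `z` (acting on the left) and under the unit quaternions (acting on the right). -/
structure IsBiinvariant {ι : Type*} [Fintype ι] [DecidableEq ι] (z : ι)
    (P : (ι → ℍ[ℝ]) → ℂ) : Prop where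
  left : ∀ M : Matrix ι ι ℍ[ℝ], Mᴴ * M = 1 → (∀ i, M i z = if i = z then 1 else 0) →
    (∀ j, M z j = if j = z then 1 else 0) → ∀ x, P (M *ᵥ x) = P x
  right : ∀ q : ℍ[ℝ], ‖q‖ = 1 → ∀ x, P (fun i => x i * q) = P x

section Homogenize

variable {φ : ℝ → ℂ}

lemma homogenize_one (s : ℂ) (φ : ℝ → ℂ) (X : ℝ) : homogenize s φ X 1 = φ X := by
  simp [homogenize]

lemma contDiffAt_ofReal_cpow_const (s : ℂ) {N : ℝ} (hN : 0 < N) {r : WithTop ℕ∞} :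
    ContDiffAt ℝ r (fun t : ℝ => (t : ℂ) ^ s) N := by
  have hpow : AnalyticAt ℂ (fun w : ℂ => w ^ s) (N : ℂ) :=
    analyticAt_id.cpow analyticAt_const (Complex.ofReal_mem_slitPlane.2 hN)
  exact (hpow.contDiffAt.restrict_scalars ℝ).comp N Complex.ofRealCLM.contDiff.contDiffAt

lemma contDiffAt_homogenize {X N : ℝ → ℝ} {t : ℝ} {r : WithTop ℕ∞} (s : ℂ)
    (hφ : ContDiffAt ℝ r φ (X t / N t)) (hX : ContDiffAt ℝ r X t) (hN : ContDiffAt ℝ r N t)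
    (hpos : 0 < N t) : ContDiffAt ℝ r (fun t => homogenize s φ (X t) (N t)) t :=
  ((contDiffAt_ofReal_cpow_const s hpos).comp t hN).mul (hφ.comp t (hX.div hN hpos.ne'))

lemma hasDerivAt_homogenize {X N : ℝ → ℝ} {X' N' t : ℝ} (s : ℂ)
    (hφ : DifferentiableAt ℝ φ (X t / N t)) (hX : HasDerivAt X X' t) (hN : HasDerivAt N N' t)
    (hpos : 0 < N t) :
    HasDerivAt (fun t => homogenize s φ (X t) (N t))
      (s * N' * homogenize (s - 1) φ (X t) (N t) +
        (X' * N t - X t * N' : ℝ) * homogenize (s - 2) (deriv φ) (X t) (N t)) t := by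
  have hpow := ((Complex.hasStrictDerivAt_cpow_const (c := s)
    (Complex.ofReal_mem_slitPlane.2 hpos)).hasDerivAt.comp_ofReal).scomp t hN
  have hcomp := hφ.hasDerivAt.scomp t (hX.div hN hpos.ne')
  have hN0 : (N t : ℂ) ≠ 0 := Complex.ofReal_ne_zero.2 hpos.ne'
  refine (hpow.mul hcomp).congr_deriv ?_
  simp only [homogenize, Complex.cpow_sub _ _ hN0, Complex.cpow_one, Complex.cpow_ofNat,
    Complex.real_smul, Complex.ofReal_div, Complex.ofReal_pow, Function.comp_apply, Pi.div_apply]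
  field_simp

variable {τ : ℝ}

lemma eventually_hasDerivAt_homogenize_line (s : ℂ) (δ : ℝ)
    (hφ : ∀ᶠ u in 𝓝 τ, DifferentiableAt ℝ φ u) :
    ∀ᶠ r in 𝓝 0, HasDerivAt (fun r => homogenize s φ (τ + δ * r) (1 + r))
      (s * homogenize (s - 1) φ (τ + δ * r) (1 + r) +
        (δ - τ) * homogenize (s - 2) (deriv φ) (τ + δ * r) (1 + r)) r := by
  have hquot : Tendsto (fun r : ℝ => (τ + δ * r) / (1 + r)) (𝓝 0) (𝓝 τ) := by
    have : ContinuousAt (fun r : ℝ => (τ + δ * r) / (1 + r)) 0 := by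
      fun_prop (disch := norm_num)
    simpa [ContinuousAt] using this
  filter_upwards [hquot.eventually hφ, lt_mem_nhds (show (-1 : ℝ) < 0 by norm_num)] with r hr hpos
  have hX : HasDerivAt (fun r => τ + δ * r) δ r := by
    simpa using ((hasDerivAt_id r).const_mul δ).const_add τ
  have hN : HasDerivAt (fun r : ℝ => 1 + r) 1 r := (hasDerivAt_id r).const_add 1
  refine (hasDerivAt_homogenize s hr hX hN (by linarith)).congr_deriv ?_
  push_cast
  ring

lemma hasDerivAt_homogenize_line (s : ℂ) (δ : ℝ) (hφ : ∀ᶠ u in 𝓝 τ, DifferentiableAt ℝ φ u) :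
    HasDerivAt (fun r => homogenize s φ (τ + δ * r) (1 + r)) (s * φ τ + (δ - τ) * deriv φ τ) 0 := by
  simpa [homogenize_one] using (eventually_hasDerivAt_homogenize_line s δ hφ).self_of_nhds

lemma iteratedDeriv_two_homogenize_line (s : ℂ) (δ : ℝ) (hφ : ContDiffAt ℝ 2 φ τ) :
    iteratedDeriv 2 (fun r => homogenize s φ (τ + δ * r) (1 + r)) 0 =
      s * (s - 1) * φ τ + 2 * (s - 1) * (δ - τ) * deriv φ τ + (δ - τ) ^ 2 * deriv (deriv φ) τ := by
  have hd1 : ∀ᶠ u in 𝓝 τ, DifferentiableAt ℝ φ u :=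
    (hφ.eventually (by simp)).mono fun u hu => hu.differentiableAt (by norm_num)
  have hd2 : ∀ᶠ u in 𝓝 τ, DifferentiableAt ℝ (deriv φ) u :=
    (hφ.eventually (by simp)).mono fun u hu =>
      (hu.derivWithin (m := 1) (by norm_num)).differentiableAt (by norm_num)
  have hderiv := (eventually_hasDerivAt_homogenize_line s δ hd1).mono fun r hr => hr.deriv
  have hsecond := ((hasDerivAt_homogenize_line (s - 1) δ hd1).const_mul s).add
    ((hasDerivAt_homogenize_line (s - 2) δ hd2).const_mul (δ - τ : ℂ))
  rw [iteratedDeriv_succ, iteratedDeriv_one, EventuallyEq.deriv_eq hderiv]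
  refine hsecond.deriv.trans ?_
  ring

end Homogenize

section Laplacian

variable {n : ℕ}

lemma quaternion_inner_eq (a b : ℍ[ℝ]) :
    inner ℝ a b = a.re * b.re + a.imI * b.imI + a.imJ * b.imJ + a.imK * b.imK := by
  simp [Quaternion.inner_def]

lemma quaternion_norm_sq_eq (a : ℍ[ℝ]) :
    ‖a‖ ^ 2 = a.re ^ 2 + a.imI ^ 2 + a.imJ ^ 2 + a.imK ^ 2 := by
  rw [sq, ← Quaternion.normSq_eq_norm_mul_self, Quaternion.normSq_def']

lemma qdir2_congr_of_eventuallyEq {f g : (Fin n → ℍ[ℝ]) → ℂ} {x : Fin n → ℍ[ℝ]} (h : f =ᶠ[𝓝 x] g)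
    (d : Fin n → ℍ[ℝ]) : qdir2 f d x = qdir2 g d x := by
  have hline : Tendsto (fun t : ℝ => x + t • d) (𝓝 0) (𝓝 x) := by
    have : Continuous fun t : ℝ => x + t • d := by fun_prop
    simpa using this.tendsto 0
  have hcongr : (fun t : ℝ => f (x + t • d)) =ᶠ[𝓝 0] fun t => g (x + t • d) := hline.eventually h
  exact hcongr.iteratedDeriv_eq 2

lemma qLap_congr_of_eventuallyEq {f g : (Fin n → ℍ[ℝ]) → ℂ} {x : Fin n → ℍ[ℝ]}
    (h : f =ᶠ[𝓝 x] g) : qLap f x = qLap g x := by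
  simp only [qLap, qdir2_congr_of_eventuallyEq h]

lemma qLap_eq_sum_of_qdir2_eq {f : (Fin n → ℍ[ℝ]) → ℂ} {x : Fin n → ℍ[ℝ]} (A B : Fin n → ℂ)
    (h : ∀ j e, ‖e‖ = 1 → qdir2 f (Pi.single j e) x = (inner ℝ (x j) e : ℝ) ^ 2 * A j + B j) :
    qLap f x = ∑ j, ((‖x j‖ : ℂ) ^ 2 * A j + 4 * B j) := by
  have hcoord : ∀ j (e : ℍ[ℝ]), e.re ^ 2 + e.imI ^ 2 + e.imJ ^ 2 + e.imK ^ 2 = 1 →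
      qdir2 f (Pi.single j e) x = ((x j).re * e.re + (x j).imI * e.imI + (x j).imJ * e.imJ +
        (x j).imK * e.imK : ℝ) ^ 2 * A j + B j := fun j e he => by
    rw [h j e (by rw [← sq_eq_sq₀ (norm_nonneg e) zero_le_one, quaternion_norm_sq_eq, he, one_pow]),
      quaternion_inner_eq]
  refine Finset.sum_congr rfl fun j _ => ?_
  rw [hcoord j 1 (by simp), hcoord j ⟨0, 1, 0, 0⟩ (by norm_num),
    hcoord j ⟨0, 0, 1, 0⟩ (by norm_num), hcoord j ⟨0, 0, 0, 1⟩ (by norm_num),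
    ← Complex.ofReal_pow ‖x j‖, quaternion_norm_sq_eq]
  simp only [Quaternion.re_one, Quaternion.imI_one, Quaternion.imJ_one, Quaternion.imK_one]
  push_cast
  ring

lemma norm_sq_add_smul_single (x : Fin n → ℍ[ℝ]) (i j : Fin n) {e : ℍ[ℝ]} (he : ‖e‖ = 1) (t : ℝ) :
    ‖(x + t • (Pi.single j e : Fin n → ℍ[ℝ])) i‖ ^ 2 =
      ‖x i‖ ^ 2 + if i = j then 2 * inner ℝ (x j) e * t + t ^ 2 else 0 := by
  obtain rfl | hij := eq_or_ne i j
  · rw [Pi.add_apply, Pi.smul_apply, Pi.single_eq_same, norm_add_sq_real, real_inner_smul_right,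
      norm_smul, he, if_pos rfl, Real.norm_eq_abs, mul_one, sq_abs]
    ring
  · simp [hij]

variable {z : Fin n} {s : ℂ} {φ : ℝ → ℂ} {x : Fin n → ℍ[ℝ]}

-- Along `x + t • d` both `N = ∑ ‖x i‖ ^ 2` and `X = ‖x z‖ ^ 2` are affine in `‖x + t • d‖ ^ 2 - 1`.
lemma qdir2_zonal (hφ : ContDiffAt ℝ 2 φ (‖x z‖ ^ 2)) (hx : ∑ i, ‖x i‖ ^ 2 = 1) (j : Fin n)
    {e : ℍ[ℝ]} (he : ‖e‖ = 1) {δ : ℝ} (hδ : δ = if z = j then 1 else 0) :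
    qdir2 (zonal z s φ) (Pi.single j e) x =
      (inner ℝ (x j) e : ℝ) ^ 2 * (4 * (s * (s - 1) * φ (‖x z‖ ^ 2) +
        2 * (s - 1) * (δ - (‖x z‖ : ℂ) ^ 2) * deriv φ (‖x z‖ ^ 2) +
        (δ - (‖x z‖ : ℂ) ^ 2) ^ 2 * deriv (deriv φ) (‖x z‖ ^ 2))) +
      2 * (s * φ (‖x z‖ ^ 2) + (δ - (‖x z‖ : ℂ) ^ 2) * deriv φ (‖x z‖ ^ 2)) := by
  set α : ℝ := inner ℝ (x j) e
  set τ : ℝ := ‖x z‖ ^ 2 with hτ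
  let q : ℝ → ℝ := fun t => 2 * α * t + t ^ 2
  let g : ℝ → ℂ := fun r => homogenize s φ (τ + δ * r) (1 + r)
  have hline : (fun t : ℝ => zonal z s φ (x + t • (Pi.single j e : Fin n → ℍ[ℝ]))) = g ∘ q := by
    funext t
    simp only [zonal, norm_sq_add_smul_single x _ j he t, Finset.sum_add_distrib, hx, Function.comp,
      Finset.sum_ite_eq', Finset.mem_univ, if_true, hδ, ite_mul, one_mul, zero_mul, g, q, α, τ]
  have hq : ∀ t, HasDerivAt q (2 * α + 2 * t) t := fun t => by
    simpa using! ((hasDerivAt_id t).const_mul (2 * α)).add (hasDerivAt_pow 2 t)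
  have hq1 : deriv q 0 = 2 * α := by simpa using (hq 0).deriv
  have hq2 : iteratedDeriv 2 q 0 = 2 := by
    rw [iteratedDeriv_succ, iteratedDeriv_one, funext fun t => (hq t).deriv]
    simp
  have hq0 : q 0 = 0 := by simp [q]
  have hg : ContDiffAt ℝ 2 g (q 0) := by
    rw [hq0]
    exact contDiffAt_homogenize s (by simpa using hφ) (by fun_prop) (by fun_prop) (by norm_num)
  have hφ1 : ∀ᶠ u in 𝓝 τ, DifferentiableAt ℝ φ u :=
    (hφ.eventually (by simp)).mono fun u hu => hu.differentiableAt (by norm_num)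
  rw [qdir2, hline, iteratedDeriv_scomp_two hg (by fun_prop), hq0, hq1, hq2,
    (hasDerivAt_homogenize_line s δ hφ1).deriv, iteratedDeriv_two_homogenize_line s δ hφ]
  simp only [Complex.real_smul, hτ]
  push_cast
  ring

lemma qLap_zonal (hφ : ContDiffAt ℝ 2 φ (‖x z‖ ^ 2)) (hx : ∑ i, ‖x i‖ ^ 2 = 1) :
    qLap (zonal z s φ) x =
      4 * ((‖x z‖ : ℂ) ^ 2 * (1 - (‖x z‖ : ℂ) ^ 2) * deriv (deriv φ) (‖x z‖ ^ 2) +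
        2 * (1 - n * (‖x z‖ : ℂ) ^ 2) * deriv φ (‖x z‖ ^ 2) +
        s * (s + 2 * n - 1) * φ (‖x z‖ ^ 2)) := by
  have hx' : ∑ i, (‖x i‖ : ℂ) ^ 2 = 1 := by exact_mod_cast hx
  rw [qLap_eq_sum_of_qdir2_eq _ _ fun j e he => qdir2_zonal hφ hx j he rfl]
  generalize deriv (deriv φ) (‖x z‖ ^ 2) = φ₂, deriv φ (‖x z‖ ^ 2) = φ₁, φ (‖x z‖ ^ 2) = φ₀
  set τ : ℂ := (‖x z‖ : ℂ) ^ 2 with hτ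
  trans ∑ j, ((‖x j‖ : ℂ) ^ 2 * (4 * (s * (s - 1) * φ₀ - 2 * (s - 1) * τ * φ₁ + τ ^ 2 * φ₂)) +
    (if z = j then τ * (4 * (2 * (s - 1) * φ₁ + (1 - 2 * τ) * φ₂)) + 8 * φ₁ else 0) +
    8 * (s * φ₀ - τ * φ₁))
  · refine Finset.sum_congr rfl fun j _ => ?_
    obtain rfl | hzj := eq_or_ne z j
    · simp only [if_true, Complex.ofReal_one, ← hτ]
      ring
    · simp only [if_neg hzj, Complex.ofReal_zero]
      ring
  · rw [Finset.sum_add_distrib, Finset.sum_add_distrib, ← Finset.sum_mul, hx', Finset.sum_ite_eq,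
      if_pos (Finset.mem_univ z), Finset.sum_const, Finset.card_univ, Fintype.card_fin,
      nsmul_eq_mul]
    ring

end Laplacian

section Invariance

variable {ι : Type*} [Fintype ι] [DecidableEq ι]

lemma exists_orthogonal_mulVec_eq {y w : ι → ℝ} (h : y ⬝ᵥ y = w ⬝ᵥ w) :
    ∃ R : Matrix ι ι ℝ, Rᵀ * R = 1 ∧ R *ᵥ y = w ∧ ∀ v, v ⬝ᵥ y = v ⬝ᵥ w → R *ᵥ v = v := by
  set Y : EuclideanSpace ℝ ι := WithLp.toLp 2 y
  set W : EuclideanSpace ℝ ι := WithLp.toLp 2 w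
  let ρ := (ℝ ∙ (Y - W))ᗮ.reflection
  let b := EuclideanSpace.basisFun ι ℝ
  have hmul : ∀ v, ρ.toMatrix b.toBasis b.toBasis *ᵥ v = (ρ (WithLp.toLp 2 v)).ofLp := fun v =>
    LinearMap.toMatrix_mulVec_repr b.toBasis b.toBasis ρ.toLinearMap (WithLp.toLp 2 v)
  refine ⟨_, (Matrix.mem_orthogonalGroup_iff' ..).1 (ρ.toMatrix_mem_unitaryGroup b b), ?_, ?_⟩
  · have hnorm : ‖Y‖ = ‖W‖ := by
      rw [← sq_eq_sq₀ (norm_nonneg Y) (norm_nonneg W), EuclideanSpace.real_norm_sq_eq,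
        EuclideanSpace.real_norm_sq_eq]
      simpa only [dotProduct, ← sq] using h
    rw [hmul, Submodule.reflection_sub hnorm]
  · intro v hv
    rw [hmul, Submodule.reflection_mem_subspace_eq_self]
    rw [Submodule.mem_orthogonal_singleton_iff_inner_left, inner_sub_right, sub_eq_zero]
    simpa only [Y, W, EuclideanSpace.inner_toLp_toLp, star_trivial, dotProduct_comm] using hv

lemma exists_unit_mul_norm (q : ℍ[ℝ]) : ∃ u : ℍ[ℝ], ‖u‖ = 1 ∧ q = u * (‖q‖ : ℝ) := by
  obtain rfl | hq := eq_or_ne q 0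
  · exact ⟨1, norm_one, by simp⟩
  · refine ⟨(‖q‖⁻¹ : ℝ) • q, norm_smul_inv_norm hq, ?_⟩
    rw [Quaternion.mul_coe_eq_smul, smul_inv_smul₀ (norm_ne_zero_iff.2 hq)]

lemma star_mul_self_eq_one_of_norm_eq_one {q : ℍ[ℝ]} (hq : ‖q‖ = 1) : star q * q = 1 := by
  rw [Quaternion.star_mul_self, Quaternion.normSq_eq_norm_mul_self, hq, one_mul, Quaternion.coe_one]

namespace IsBiinvariant

variable {z : ι} {P : (ι → ℍ[ℝ]) → ℂ}

lemma diagonal_mul (hP : IsBiinvariant z P) {u : ι → ℍ[ℝ]} (hu : ∀ i, ‖u i‖ = 1) (hz : u z = 1)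
    (x : ι → ℍ[ℝ]) : P (fun i => u i * x i) = P x := by
  have hdiag : diagonal u *ᵥ x = fun i => u i * x i := funext (mulVec_diagonal u x)
  rw [← hdiag]
  refine hP.left _ ?_ (fun i => ?_) (fun j => ?_) x
  · rw [diagonal_conjTranspose, diagonal_mul_diagonal, ← diagonal_one]
    exact congrArg diagonal (funext fun i => star_mul_self_eq_one_of_norm_eq_one (hu i))
  · by_cases h : i = z <;> simp [h, hz]
  · by_cases h : j = z <;> simp [h, hz, Ne.symm]

lemma eq_norm (hP : IsBiinvariant z P) (x : ι → ℍ[ℝ]) :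
    P x = P (fun i => ((‖x i‖ : ℝ) : ℍ[ℝ])) := by
  choose u hu hxu using fun i => exists_unit_mul_norm (x i)
  have hzu : star (u z) * u z = 1 := star_mul_self_eq_one_of_norm_eq_one (hu z)
  have hzu' : u z * star (u z) = 1 := by
    simpa using star_mul_self_eq_one_of_norm_eq_one ((norm_star (u z)).trans (hu z))
  have hunit : ∀ i, ‖u i * star (u z)‖ = 1 := fun i => by rw [norm_mul, norm_star, hu, hu, one_mul]
  rw [← hP.diagonal_mul hunit hzu' (fun i => ((‖x i‖ : ℝ) : ℍ[ℝ])), ← hP.right (u z) (hu z)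
    (fun i => u i * star (u z) * _)]
  congr 1
  funext i
  rw [mul_assoc, Quaternion.coe_commutes, ← mul_assoc, mul_assoc (u i), hzu, mul_one, ← hxu]

lemma orthogonal_mulVec (hP : IsBiinvariant z P) {R : Matrix ι ι ℝ} (hR : Rᵀ * R = 1)
    (hz : R *ᵥ Pi.single z 1 = Pi.single z 1) (y : ι → ℝ) :
    P (fun i => ((R *ᵥ y) i : ℍ[ℝ])) = P (fun i => (y i : ℍ[ℝ])) := by
  have hcol : ∀ i, R i z = if i = z then 1 else 0 := fun i => by
    simpa [Pi.single_apply] using congrFun hz i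
  have hzT : Rᵀ *ᵥ Pi.single z 1 = Pi.single z 1 := by
    rw [← hz, mulVec_mulVec, hR, one_mulVec, hz]
  have hrow : ∀ j, R z j = if j = z then 1 else 0 := fun j => by
    simpa [Pi.single_apply] using congrFun hzT j
  have hmul : R.map (algebraMap ℝ ℍ[ℝ]) *ᵥ (fun i => (y i : ℍ[ℝ])) =
      fun i => ((R *ᵥ y) i : ℍ[ℝ]) :=
    funext fun i => ((algebraMap ℝ ℍ[ℝ]).map_mulVec R y i).symm
  rw [← hmul]
  refine hP.left _ ?_ (fun i => ?_) (fun j => ?_) _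
  · have hstar : (R.map (algebraMap ℝ ℍ[ℝ]))ᴴ = Rᵀ.map (algebraMap ℝ ℍ[ℝ]) := by
      ext1 i j
      simp [conjTranspose_apply]
    rw [hstar, ← Matrix.map_mul, hR, Matrix.map_one _ (map_zero _) (map_one _)]
  · rw [Matrix.map_apply, hcol]
    split_ifs <;> simp
  · rw [Matrix.map_apply, hrow]
    split_ifs <;> simp

lemma eq_of_norm_eq (hP : IsBiinvariant z P) {x x' : ι → ℍ[ℝ]} (hz : ‖x z‖ = ‖x' z‖)
    (h : ∑ i, ‖x i‖ ^ 2 = ∑ i, ‖x' i‖ ^ 2) : P x = P x' := by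
  obtain ⟨R, hR, hx, hfix⟩ := exists_orthogonal_mulVec_eq (y := fun i => ‖x i‖)
    (w := fun i => ‖x' i‖) (by simpa only [dotProduct, ← sq] using h)
  rw [hP.eq_norm x, hP.eq_norm x', ← hP.orthogonal_mulVec hR (hfix _ (by simpa using hz)), hx]

end IsBiinvariant

end Invariance

section Profile

variable {n : ℕ}

lemma xtheta_zero_apply (h : 0 < n) (θ : ℝ) : xtheta n θ ⟨0, h⟩ = (Real.cos θ : ℝ) :=
  if_pos rfl

lemma sum_norm_sq_xtheta (hn : 2 ≤ n) (θ : ℝ) : ∑ i, ‖xtheta n θ i‖ ^ 2 = 1 := by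
  obtain ⟨m, rfl⟩ := Nat.exists_eq_add_of_le' hn
  have hmid : ∀ i : Fin m, xtheta (m + 2) θ i.castSucc.succ = 0 := fun i => by
    simp [xtheta, i.is_lt.ne]
  have hfirst : xtheta (m + 2) θ 0 = (Real.cos θ : ℝ) := xtheta_zero_apply _ θ
  have hlast : xtheta (m + 2) θ (Fin.last m).succ = (Real.sin θ : ℝ) := by
    simp [xtheta]
  rw [Fin.sum_univ_succ, Fin.sum_univ_castSucc, hfirst, hlast]
  simp only [hmid, Quaternion.norm_coe]
  simp

lemma xtheta_ne_zero (hn : 2 ≤ n) (θ : ℝ) : xtheta n θ ≠ 0 := fun h => by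
  simpa [h] using sum_norm_sq_xtheta hn θ

lemma contDiff_xtheta {r : WithTop ℕ∞} : ContDiff ℝ r (xtheta n) := by
  refine contDiff_pi.2 fun i => ?_
  unfold xtheta
  split_ifs
  · exact (algebraMapCLM ℝ ℍ[ℝ]).contDiff.comp Real.contDiff_cos
  · exact (algebraMapCLM ℝ ℍ[ℝ]).contDiff.comp Real.contDiff_sin
  · exact contDiff_const

lemma contDiffOn_arccos_sqrt {r : WithTop ℕ∞} :
    ContDiffOn ℝ r (fun τ => Real.arccos (Real.sqrt τ)) (Set.Ioo 0 1) := fun τ hτ =>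
  have hlt : Real.sqrt τ < 1 := (Real.sqrt_lt' one_pos).2 (by simpa using hτ.2)
  ((Real.contDiffAt_arccos (by linarith [Real.sqrt_nonneg τ]) hlt.ne).comp τ
    (Real.contDiffAt_sqrt hτ.1.ne')).contDiffWithinAt

lemma norm_sq_xtheta_arccos_sqrt (h : 0 < n) {τ : ℝ} (hτ : τ ∈ Set.Icc 0 1) :
    ‖xtheta n (Real.arccos (Real.sqrt τ)) ⟨0, h⟩‖ ^ 2 = τ := by
  rw [xtheta_zero_apply, Real.cos_arccos (by linarith [Real.sqrt_nonneg τ])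
    (Real.sqrt_le_one.2 hτ.2), Quaternion.norm_coe, Real.norm_eq_abs, sq_abs, Real.sq_sqrt hτ.1]

variable {P : (Fin n → ℍ[ℝ]) → ℂ} {r : WithTop ℕ∞}

lemma contDiffOn_profile (hn : 2 ≤ n) (hP : ContDiffOn ℝ r P {0}ᶜ) :
    ContDiffOn ℝ r (profile P) (Set.Ioo 0 1) :=
  hP.comp (contDiff_xtheta.comp_contDiffOn contDiffOn_arccos_sqrt) fun _ _ => xtheta_ne_zero hn _

lemma IsPolyFun.contDiff (hP : IsPolyFun P) : ContDiff ℝ r P := by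
  obtain ⟨p, hp⟩ := hP
  have hcoord : ∀ jl : Fin n × Fin 4, ContDiff ℝ r fun x : Fin n → ℍ[ℝ] =>
      ((![(x jl.1).re, (x jl.1).imI, (x jl.1).imJ, (x jl.1).imK] jl.2 : ℝ) : ℂ) := by
    rintro ⟨j, l⟩
    refine Complex.ofRealCLM.contDiff.comp ?_
    have hlin : ∀ f : ℍ[ℝ] →ₗ[ℝ] ℝ, ContDiff ℝ r fun x : Fin n → ℍ[ℝ] => f (x j) := fun f =>
      f.toContinuousLinearMap.contDiff.comp (contDiff_apply ..)
    fin_cases l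
    exacts [hlin (QuaternionAlgebra.reₗ ..), hlin (QuaternionAlgebra.imIₗ ..),
      hlin (QuaternionAlgebra.imJₗ ..), hlin (QuaternionAlgebra.imKₗ ..)]
  simp only [funext hp, MvPolynomial.eval_eq]
  exact ContDiff.sum fun d _ => contDiff_const.mul (contDiff_prod fun jl _ => (hcoord jl).pow _)

lemma ofReal_sqrt_cpow {N : ℝ} (hN : 0 < N) (κ : ℂ) :
    (Real.sqrt N : ℂ) ^ κ = (N : ℂ) ^ (κ / 2) := by
  have hsqrt : (Real.sqrt N : ℂ) ≠ 0 := Complex.ofReal_ne_zero.2 (Real.sqrt_pos.2 hN).ne'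
  rw [← Real.mul_self_sqrt hN.le, Complex.ofReal_mul,
    Complex.mul_cpow_ofReal_nonneg (Real.sqrt_nonneg N) (Real.sqrt_nonneg N),
    ← Complex.cpow_add _ _ hsqrt, add_halves, Real.mul_self_sqrt hN.le]

lemma IsBiinvariant.eq_zonal_profile {κ : ℂ} (hn : 2 ≤ n)
    (hP : IsBiinvariant ⟨0, two_pos.trans_le hn⟩ P)
    (hhom : ∀ (t : ℝ) (x : Fin n → ℍ[ℝ]), 0 < t → x ≠ 0 → P (t • x) = (t : ℂ) ^ κ * P x)
    {x : Fin n → ℍ[ℝ]} (hx : x ≠ 0) :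
    P x = zonal ⟨0, two_pos.trans_le hn⟩ (κ / 2) (profile P) x := by
  set X := ‖x ⟨0, two_pos.trans_le hn⟩‖ ^ 2
  set N := ∑ i, ‖x i‖ ^ 2
  obtain ⟨j, hj⟩ := Function.ne_iff.1 hx
  have hNpos : 0 < N :=
    Finset.sum_pos' (fun i _ => sq_nonneg _)
      ⟨j, Finset.mem_univ j, pow_pos (norm_pos_iff.2 hj) 2⟩
  have hXN : X ≤ N :=
    Finset.single_le_sum (f := fun i => ‖x i‖ ^ 2) (fun i _ => sq_nonneg _) (Finset.mem_univ _)
  set y := xtheta n (Real.arccos (Real.sqrt (X / N)))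
  have hnorm : ∀ i, ‖(Real.sqrt N • y) i‖ ^ 2 = N * ‖y i‖ ^ 2 := fun i => by
    rw [Pi.smul_apply, norm_smul, mul_pow, Real.norm_eq_abs, sq_abs, Real.sq_sqrt hNpos.le]
  have hPx : P x = P (Real.sqrt N • y) := by
    refine hP.eq_of_norm_eq ?_ ?_
    · rw [← sq_eq_sq₀ (norm_nonneg _) (norm_nonneg _), hnorm,
        norm_sq_xtheta_arccos_sqrt _ ⟨by positivity, (div_le_one hNpos).2 hXN⟩,
        mul_div_cancel₀ _ hNpos.ne']
    · rw [Finset.sum_congr rfl fun i _ => hnorm i, ← Finset.mul_sum, sum_norm_sq_xtheta hn, mul_one]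
  rw [hPx, hhom _ _ (Real.sqrt_pos.2 hNpos) (xtheta_ne_zero hn _),
    ofReal_sqrt_cpow hNpos]
  rfl

end Profile

theorem stmt4_general {n : ℕ} (hn : 2 ≤ n) {κ : ℂ} {r : WithTop ℕ∞} (hr : 2 ≤ r)
    {P : (Fin n → ℍ[ℝ]) → ℂ} (hP : ContDiffOn ℝ r P {0}ᶜ) (hharm : ∀ x ≠ 0, qLap P x = 0)
    (hhom : ∀ (t : ℝ) (x : Fin n → ℍ[ℝ]), 0 < t → x ≠ 0 → P (t • x) = (t : ℂ) ^ κ * P x)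
    (hinv : IsBiinvariant ⟨0, two_pos.trans_le hn⟩ P) :
    ContDiffOn ℝ r (profile P) (Set.Ioo 0 1) ∧
    ∀ τ ∈ Set.Ioo (0 : ℝ) 1,
      (τ : ℂ) * (1 - (τ : ℂ)) * deriv (deriv (profile P)) τ +
        2 * (1 - (n : ℂ) * (τ : ℂ)) * deriv (profile P) τ +
        (κ / 2) * (κ / 2 + 2 * (n : ℂ) - 1) * profile P τ = 0 := by
  refine ⟨contDiffOn_profile hn hP, fun τ hτ => ?_⟩
  set x := xtheta n (Real.arccos (Real.sqrt τ))
  have hx : x ≠ 0 := xtheta_ne_zero hn _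
  have hxτ : ‖x ⟨0, two_pos.trans_le hn⟩‖ ^ 2 = τ :=
    norm_sq_xtheta_arccos_sqrt _ (Set.Ioo_subset_Icc_self hτ)
  have hφ : ContDiffAt ℝ 2 (profile P) (‖x ⟨0, two_pos.trans_le hn⟩‖ ^ 2) := by
    rw [hxτ]
    exact ((contDiffOn_profile hn hP).contDiffAt (Ioo_mem_nhds hτ.1 hτ.2)).of_le hr
  have hzonal : P =ᶠ[𝓝 x] zonal ⟨0, two_pos.trans_le hn⟩ (κ / 2) (profile P) :=
    (isOpen_ne.eventually_mem hx).mono fun y hy => hinv.eq_zonal_profile hn hhom hy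
  have hlap := hharm x hx
  rw [qLap_congr_of_eventuallyEq hzonal, qLap_zonal hφ (sum_norm_sq_xtheta hn _),
    ← Complex.ofReal_pow, hxτ] at hlap
  exact (mul_eq_zero.1 hlap).resolve_left (by norm_num)

/-- the function `φ(τ) = P(x(arccos √τ))` attached to a harmonic, homogeneous,
bi-invariant polynomial satisfies a hypergeometric differential equation on `(0,1)`. -/
theorem stmt4 (n : ℕ) (hn : 2 ≤ n) (k : ℕ) (hk : Even k)
    (P : (Fin n → ℍ[ℝ]) → ℂ) (hpoly : IsPolyFun P)
    (hharm : ∀ x, qLap P x = 0)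
    (hhom : ∀ (t : ℝ) (x : Fin n → ℍ[ℝ]), P (t • x) = (t : ℂ) ^ k * P x)
    (hleft : ∀ M : Matrix (Fin n) (Fin n) ℍ[ℝ], Mᴴ * M = 1 →
      (∀ i : Fin n, M i ⟨0, by omega⟩ = if i = ⟨0, by omega⟩ then 1 else 0) →
      (∀ j : Fin n, M ⟨0, by omega⟩ j = if j = ⟨0, by omega⟩ then 1 else 0) →
      ∀ x, P (M.mulVec x) = P x)
    (hright : ∀ q : ℍ[ℝ], ‖q‖ = 1 → ∀ x, P (fun i => x i * q) = P x) :
    ContDiffOn ℝ (⊤ : ℕ∞) (fun τ : ℝ => P (xtheta n (Real.arccos (Real.sqrt τ)))) (Set.Ioo 0 1) ∧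
    ∀ τ ∈ Set.Ioo (0 : ℝ) 1,
      (τ : ℂ) * (1 - (τ : ℂ)) *
          deriv (deriv (fun τ : ℝ => P (xtheta n (Real.arccos (Real.sqrt τ))))) τ +
        2 * (1 - (n : ℂ) * (τ : ℂ)) *
          deriv (fun τ : ℝ => P (xtheta n (Real.arccos (Real.sqrt τ)))) τ +
        ((k : ℂ) / 2) * ((k : ℂ) / 2 + 2 * (n : ℂ) - 1) *
          P (xtheta n (Real.arccos (Real.sqrt τ))) = 0 :=
  stmt4_general hn (κ := k) (by norm_cast) hpoly.contDiff.contDiffOn (fun x _ => hharm x)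
    (fun t x _ _ => by rw [hhom, Complex.cpow_natCast]) ⟨hleft, hright⟩
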